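/- There exists a real constant c such that for all k ≥ 2 and all n ≥ 1, minS_k(n) ≤ (1/2)·log₂(1 + √2) · n − (1/2)·log₂ n + c. -/

import Mathlib

/-!
Words with few occurrences of every subword are `xxyyxxyy⋯` with `B = n / 2` blocks. These
occurrences can be counted run by run: prepending a run of length one to a subword acts on the
bounds, as sequences in `B`, by the linear operator `singleStep`. For alternating subwords of length
`m` this gives the bound `2 ^ m * ((B + m) / 2).choose m`, and for `r = √2 - 1` the identity
`2 * r + r ^ 2 = 1` turns this number, multiplied by `r ^ B`, into a binomial probability up to a
constant. By Fourier inversion on the circle, using that `‖p * exp (iθ) + q‖` is at most a Gaussian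
in `θ`, it is `O(1 / √B)`.

Inserting a longer run does not increase a bound that grows by a factor of at least `7 / 3` in each
step. Convolving with the powers of `7 / 3` enforces this growth, commutes with `singleStep`,
and costs only a constant factor since `7 / 3 < 1 + √2`.
-/

open List Real

/-- `occ w u` is the number of occurrences of `u` as a subword (subsequence) of `w`,
i.e. the multiplicity of `u` among the `2^|w|` sublists of `w`. -/
def occ {α : Type*} [DecidableEq α] (w u : List α) : ℕ := w.sublists.count u

/-- `maxocc w` is the maximal number of occurrences of any subword of `w`. -/
noncomputable def maxocc {α : Type*} [DecidableEq α] (w : List α) : ℕ :=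
  sSup {n : ℕ | ∃ u : List α, occ w u = n}

/-- `minS k n` is the minimal subword entropy `log₂ (maxocc w)` over words `w`
of length `n` over the alphabet `Fin k`. -/
noncomputable def minS (k n : ℕ) : ℝ :=
  sInf {s : ℝ | ∃ w : List (Fin k), w.length = n ∧ s = Real.logb 2 (maxocc w)}

section Occurrences

variable {α : Type*} [DecidableEq α]

theorem occ_nil_cons (c : α) (s : List α) : occ [] (c :: s) = 0 := by simp [occ]

theorem occ_cons (a : α) (w u : List α) :
    occ (a :: w) u = occ w u + (w.sublists'.map (cons a)).count u := by
  simp only [occ, (sublists_perm_sublists' _).count_eq, sublists'_cons, count_append]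

theorem occ_cons_cons_self (a : α) (w u : List α) :
    occ (a :: w) (a :: u) = occ w (a :: u) + occ w u := by
  rw [occ_cons, count_map_of_injective _ _ cons_injective, occ, occ,
    (sublists_perm_sublists' w).count_eq u]

theorem occ_cons_of_head?_ne {a : α} {u : List α} (h : u.head? ≠ some a) (w : List α) :
    occ (a :: w) u = occ w u := by
  rw [occ_cons, Nat.add_eq_left, count_eq_zero]
  intro hu
  obtain ⟨v, -, rfl⟩ := mem_map.1 hu
  exact h rfl

theorem occ_nil_right (w : List α) : occ w [] = 1 := by
  induction w with
  | nil => simp [occ]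
  | cons a w ih => rw [occ_cons_of_head?_ne (by simp), ih]

theorem occ_cons_le_two_mul {w : List α} {M : ℝ} (hM : ∀ u, (occ w u : ℝ) ≤ M) (a : α)
    (u : List α) : (occ (a :: w) u : ℝ) ≤ 2 * M := by
  by_cases hu : u.head? = some a
  · obtain ⟨v, rfl⟩ := head?_eq_some_iff.1 hu
    rw [occ_cons_cons_self]
    push_cast
    linarith [hM v, hM (a :: v)]
  · rw [occ_cons_of_head?_ne hu]
    linarith [hM u, hM [], (occ w []).cast_nonneg (α := ℝ)]

theorem bddAbove_occ (w : List α) : BddAbove {n : ℕ | ∃ u : List α, occ w u = n} := by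
  refine ⟨w.sublists.length, ?_⟩
  rintro _ ⟨u, rfl⟩
  exact count_le_length

theorem one_le_maxocc (w : List α) : 1 ≤ maxocc w :=
  le_csSup (bddAbove_occ w) ⟨[], occ_nil_right w⟩

theorem exists_occ_eq_maxocc (w : List α) : ∃ u, occ w u = maxocc w :=
  Nat.sSup_mem (s := {n : ℕ | ∃ u : List α, occ w u = n}) ⟨_, [], rfl⟩ (bddAbove_occ w)

theorem minS_le_logb {k n : ℕ} {w : List (Fin k)} (hw : w.length = n) {M : ℝ}
    (hM : ∀ u, (occ w u : ℝ) ≤ M) : minS k n ≤ logb 2 M := by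
  have hbdd : BddBelow {s : ℝ | ∃ w : List (Fin k), w.length = n ∧ s = logb 2 (maxocc w)} := by
    refine ⟨0, ?_⟩
    rintro _ ⟨v, -, rfl⟩
    exact logb_nonneg one_lt_two (by exact_mod_cast one_le_maxocc v)
  obtain ⟨u, hu⟩ := exists_occ_eq_maxocc w
  calc minS k n ≤ logb 2 (maxocc w) := csInf_le hbdd ⟨w, hw, rfl⟩
    _ ≤ logb 2 M := logb_le_logb_of_le one_lt_two
        (by exact_mod_cast one_le_maxocc w) (hu ▸ hM u)

end Occurrences

section Sequences

open Finset.HasAntidiagonal (antidiagonal mem_antidiagonal)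

variable {ρ : ℝ} {a g : ℕ → ℝ}

/-- The sequence `g` is nonnegative and grows by at least the factor `ρ` in each step. -/
def GrowsBy (ρ : ℝ) (g : ℕ → ℝ) : Prop := 0 ≤ g 0 ∧ ∀ B, ρ * g B ≤ g (B + 1)

theorem GrowsBy.nonneg (hg : GrowsBy ρ g) (hρ : 0 ≤ ρ) (B : ℕ) : 0 ≤ g B := by
  induction B with
  | zero => exact hg.1
  | succ B ih => exact (mul_nonneg hρ ih).trans (hg.2 B)

theorem GrowsBy.monotone (hg : GrowsBy ρ g) (hρ : 1 ≤ ρ) : Monotone g :=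
  monotone_nat_of_le_succ fun B ↦
    (le_mul_of_one_le_left (hg.nonneg (zero_le_one.trans hρ) B) hρ).trans (hg.2 B)

/-- The recursion for the occurrences of `c :: v` in the block words, `g` bounding those of `v`:
the block words whose number of blocks is smaller by two start with the same letter. -/
def singleStep (g : ℕ → ℝ) : ℕ → ℝ
  | 0 => 0
  | 1 => 2 * g 0
  | B + 2 => singleStep g B + 2 * g (B + 1)

theorem GrowsBy.singleStep (hg : GrowsBy ρ g) : GrowsBy ρ (singleStep g) := by
  refine ⟨le_rfl, fun B ↦ ?_⟩
  induction B using Nat.twoStepInduction with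
  | zero => simpa [_root_.singleStep] using hg.1
  | one => simpa [_root_.singleStep, mul_left_comm ρ] using hg.2 0
  | more B ih _ =>
    rw [_root_.singleStep, _root_.singleStep]
    linarith [hg.2 (B + 1)]

theorem GrowsBy.singleStep_le (hg : GrowsBy ρ g) (hρ : 0 ≤ ρ) (B : ℕ) :
    (ρ ^ 2 - 1) * _root_.singleStep g B ≤ 2 * ρ * g B := by
  induction B using Nat.twoStepInduction with
  | zero =>
    rw [_root_.singleStep, mul_zero]
    have := hg.1
    positivity
  | one =>
    rw [_root_.singleStep]
    nlinarith [hg.2 0, hg.1]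
  | more B ih _ =>
    rw [_root_.singleStep]
    nlinarith [hg.2 B, hg.2 (B + 1)]

/-- The convolution of the geometric sequence of ratio `ρ` with `a`. -/
noncomputable def geomConv (ρ : ℝ) (a : ℕ → ℝ) (n : ℕ) : ℝ :=
  ∑ p ∈ antidiagonal n, ρ ^ p.1 * a p.2

theorem geomConv_zero (ρ : ℝ) (a : ℕ → ℝ) : geomConv ρ a 0 = a 0 := by simp [geomConv]

theorem geomConv_succ (ρ : ℝ) (a : ℕ → ℝ) (n : ℕ) :
    geomConv ρ a (n + 1) = a (n + 1) + ρ * geomConv ρ a n := by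
  simp only [geomConv, Finset.Nat.sum_antidiagonal_succ, pow_zero, one_mul, Finset.mul_sum,
    pow_succ', mul_assoc]

theorem growsBy_geomConv (ha : ∀ n, 0 ≤ a n) : GrowsBy ρ (geomConv ρ a) := by
  refine ⟨(ha 0).trans_eq (geomConv_zero ρ a).symm, fun n ↦ ?_⟩
  rw [geomConv_succ]
  linarith [ha (n + 1)]

theorem geomConv_singleStep_add_two (ρ : ℝ) (a : ℕ → ℝ) (B : ℕ) :
    geomConv ρ (singleStep a) (B + 2) = geomConv ρ (singleStep a) B + 2 * geomConv ρ a (B + 1) := by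
  induction B with
  | zero =>
    simp only [geomConv_succ, geomConv_zero, singleStep]
    ring
  | succ B ih =>
    rw [geomConv_succ, ih, geomConv_succ ρ (singleStep a) B, geomConv_succ ρ a (B + 1), singleStep]
    ring

theorem singleStep_geomConv (ρ : ℝ) (a : ℕ → ℝ) :
    singleStep (geomConv ρ a) = geomConv ρ (singleStep a) := by
  funext B
  induction B using Nat.twoStepInduction with
  | zero => rw [geomConv_zero, singleStep, singleStep]
  | one => simp only [singleStep, geomConv_zero, geomConv_succ, mul_zero, add_zero]
  | more B ih _ => rw [geomConv_singleStep_add_two, ← ih, singleStep]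

theorem geomConv_mul_pow (ρ r : ℝ) (a : ℕ → ℝ) (n : ℕ) :
    geomConv ρ a n * r ^ n = geomConv (ρ * r) (fun j ↦ a j * r ^ j) n := by
  rw [geomConv, geomConv, Finset.sum_mul]
  refine Finset.sum_congr rfl fun p hp ↦ ?_
  rw [← mem_antidiagonal.1 hp, pow_add]
  ring

theorem geomConv_mul_sqrt_le {K : ℝ} (hρ : 0 ≤ ρ) (hρ' : ρ < 1)
    (ha : ∀ n, 0 ≤ a n) (hK : ∀ n : ℕ, a n * √(n + 1) ≤ K) (n : ℕ) :
    geomConv ρ a n * √(n + 1) ≤ K / (1 - ρ) ^ 2 := by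
  have hK0 : 0 ≤ K := (mul_nonneg (ha 0) (sqrt_nonneg _)).trans (hK 0)
  have hterm : ∀ p ∈ antidiagonal n,
      ρ ^ p.1 * a p.2 * √(n + 1) ≤ (p.1 + 1) * ρ ^ p.1 * K := by
    rintro ⟨i, j⟩ hij
    obtain rfl := mem_antidiagonal.1 hij
    have hsqrt : √((i + j : ℕ) + 1) ≤ (i + 1) * √(j + 1) := by
      rw [sqrt_le_left (by positivity), mul_pow, sq_sqrt (by positivity)]
      push_cast
      nlinarith [mul_nonneg (i.cast_nonneg (α := ℝ)) (j.cast_nonneg (α := ℝ))]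
    calc ρ ^ i * a j * √((i + j : ℕ) + 1) ≤ ρ ^ i * a j * ((i + 1) * √(j + 1)) := by
          have := ha j
          gcongr
      _ = (i + 1) * ρ ^ i * (a j * √(j + 1)) := by ring
      _ ≤ (i + 1) * ρ ^ i * K := by
          gcongr
          exact hK j
  have hsum : HasSum (fun i : ℕ ↦ (i + 1) * ρ ^ i) (1 / (1 - ρ) ^ 2) := by
    simpa using hasSum_choose_mul_geometric_of_norm_lt_one 1
      (show ‖ρ‖ < 1 by rwa [norm_of_nonneg hρ])
  calc geomConv ρ a n * √(n + 1)
      ≤ ∑ p ∈ antidiagonal n, (p.1 + 1) * ρ ^ p.1 * K := by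
        rw [geomConv, Finset.sum_mul]
        exact Finset.sum_le_sum hterm
    _ = (∑ i ∈ Finset.range (n + 1), (i + 1) * ρ ^ i) * K := by
        rw [Finset.Nat.sum_antidiagonal_eq_sum_range_succ_mk, Finset.sum_mul]
    _ ≤ 1 / (1 - ρ) ^ 2 * K := by
        gcongr
        exact sum_le_hasSum _ (fun i _ ↦ by positivity) hsum
    _ = K / (1 - ρ) ^ 2 := by ring

theorem iterate_singleStep_one (m B : ℕ) :
    singleStep^[m] 1 B = 2 ^ m * ((B + m) / 2).choose m := by
  induction m generalizing B with
  | zero => simp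
  | succ m ihm =>
    rw [Function.iterate_succ_apply']
    induction B using Nat.twoStepInduction with
    | zero =>
      rw [singleStep, Nat.choose_eq_zero_of_lt (by omega), Nat.cast_zero, mul_zero]
    | one =>
      rw [singleStep, ihm, show (1 + (m + 1)) / 2 = (0 + m) / 2 + 1 by omega,
        Nat.choose_succ_succ, Nat.choose_eq_zero_of_lt (show (0 + m) / 2 < m + 1 by omega)]
      push_cast
      ring
    | more B ihB _ =>
      rw [singleStep, ihm, ihB, show (B + 2 + (m + 1)) / 2 = (B + 1 + m) / 2 + 1 by omega,
        Nat.choose_succ_succ, show (B + (m + 1)) / 2 = (B + 1 + m) / 2 by omega]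
      push_cast
      ring

end Sequences

section BlockWords

variable {α : Type*}

/-- The word `xxyyxxyy⋯` consisting of `B` blocks of length two. -/
def blockWord : ℕ → α → α → List α
  | 0, _, _ => []
  | B + 1, x, y => x :: x :: blockWord B y x

theorem length_blockWord (B : ℕ) (x y : α) : (blockWord B x y).length = 2 * B := by
  induction B generalizing x y with
  | zero => rfl
  | succ B ih =>
    rw [blockWord, length_cons, length_cons, ih]
    ring

theorem exists_eq_replicate_append (c : α) (u : List α) :
    ∃ ℓ v, u = replicate ℓ c ++ v ∧ v.head? ≠ some c := by
  induction u with
  | nil => exact ⟨0, [], rfl, by simp⟩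
  | cons d u ih =>
    by_cases hd : d = c
    · obtain ⟨ℓ, v, rfl, hv⟩ := ih
      exact ⟨ℓ + 1, v, by rw [hd, replicate_succ, cons_append], hv⟩
    · exact ⟨0, d :: u, rfl, by simpa using hd⟩

variable [DecidableEq α] {ρ C : ℝ} {g : ℕ → ℝ} {c x y : α} {s u v : List α}

theorem occ_blockWord_succ_of_head?_ne (hu : u.head? ≠ some x) (B : ℕ) (y : α) :
    occ (blockWord (B + 1) x y) u = occ (blockWord B y x) u := by
  rw [blockWord, occ_cons_of_head?_ne hu, occ_cons_of_head?_ne hu]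

theorem occ_blockWord_succ_cons_of_ne (hxc : x ≠ c) (B : ℕ) (y : α) (s : List α) :
    occ (blockWord (B + 1) x y) (c :: s) = occ (blockWord B y x) (c :: s) :=
  occ_blockWord_succ_of_head?_ne (by simpa using hxc.symm) B y

theorem occ_blockWord_cons_eq_zero (hxc : x ≠ c) (hyc : y ≠ c) (B : ℕ) (s : List α) :
    occ (blockWord B x y) (c :: s) = 0 := by
  induction B generalizing x y with
  | zero => exact occ_nil_cons c s
  | succ B ih => rw [occ_blockWord_succ_cons_of_ne hxc, ih hyc hxc]

theorem occ_blockWord_succ_cons (hv : v.head? ≠ some c) (B : ℕ) (y : α) :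
    occ (blockWord (B + 1) c y) (c :: v) =
      occ (blockWord B y c) (c :: v) + 2 * occ (blockWord B y c) v := by
  rw [blockWord, occ_cons_cons_self, occ_cons_cons_self, occ_cons_of_head?_ne hv]
  ring

theorem occ_blockWord_succ_cons_cons (B : ℕ) (c y : α) (s : List α) :
    occ (blockWord (B + 1) c y) (c :: c :: s) = occ (blockWord B y c) (c :: c :: s) +
      2 * occ (blockWord B y c) (c :: s) + occ (blockWord B y c) s := by
  simp only [blockWord, occ_cons_cons_self]
  ring

/-- `g B` bounds the number of occurrences of `u` in both block words with `B` blocks over any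
two distinct letters. -/
def IsBlockBound (g : ℕ → ℝ) (u : List α) : Prop :=
  ∀ B x y, x ≠ y → (occ (blockWord B x y) u : ℝ) ≤ g B

theorem IsBlockBound.mono {f : ℕ → ℝ} (hu : IsBlockBound f u) (hfg : ∀ B, f B ≤ g B) :
    IsBlockBound g u :=
  fun B x y hxy ↦ (hu B x y hxy).trans (hfg B)

theorem isBlockBound_nil (hg : ∀ B, 1 ≤ g B) : IsBlockBound g ([] : List α) := fun B x y _ ↦ by
  rw [occ_nil_right, Nat.cast_one]
  exact hg B

theorem isBlockBound_cons (hg : GrowsBy ρ g) (hρ : 1 ≤ ρ)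
    (h : ∀ B y, c ≠ y → (occ (blockWord B c y) (c :: s) : ℝ) ≤ g B) :
    IsBlockBound g (c :: s) := by
  intro B x y hxy
  have hgB := hg.nonneg (zero_le_one.trans hρ) B
  obtain rfl | hxc := eq_or_ne x c
  · exact h B y hxy
  obtain rfl | hyc := eq_or_ne y c
  · cases B with
    | zero => rwa [blockWord, occ_nil_cons, Nat.cast_zero]
    | succ B =>
      rw [occ_blockWord_succ_cons_of_ne hxc]
      exact (h B x hxy.symm).trans (hg.monotone hρ B.le_succ)
  · rwa [occ_blockWord_cons_eq_zero hxc hyc, Nat.cast_zero]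

theorem IsBlockBound.cons (hv : IsBlockBound g v) (hc : v.head? ≠ some c) (hg : GrowsBy ρ g)
    (hρ : 1 ≤ ρ) : IsBlockBound (singleStep g) (c :: v) := by
  refine isBlockBound_cons hg.singleStep hρ fun B y hcy ↦ ?_
  induction B using Nat.twoStepInduction with
  | zero => rw [blockWord, occ_nil_cons, singleStep, Nat.cast_zero]
  | one =>
    have hv₀ := hv 0 y c hcy.symm
    rw [blockWord] at hv₀
    rw [occ_blockWord_succ_cons hc, blockWord, occ_nil_cons, zero_add, singleStep]
    push_cast
    gcongr
  | more B ih _ =>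
    rw [occ_blockWord_succ_cons hc, occ_blockWord_succ_cons_of_ne hcy.symm, singleStep]
    push_cast
    linarith [hv (B + 1) y c hcy.symm]

theorem IsBlockBound.occ_le_of_growsBy (hu : IsBlockBound (fun B ↦ C * g B) (c :: s))
    (hg : GrowsBy ρ g) (hρ : 0 ≤ ρ) (hCρ : C ≤ ρ) (hcy : c ≠ y) (B : ℕ) :
    (occ (blockWord B y c) (c :: s) : ℝ) ≤ g B := by
  cases B with
  | zero =>
    rw [blockWord, occ_nil_cons, Nat.cast_zero]
    exact hg.1
  | succ B =>
    rw [occ_blockWord_succ_cons_of_ne hcy.symm]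
    calc (occ (blockWord B c y) (c :: s) : ℝ) ≤ C * g B := hu B c y hcy
      _ ≤ ρ * g B := mul_le_mul_of_nonneg_right hCρ (hg.nonneg hρ B)
      _ ≤ g (B + 1) := hg.2 B

theorem isBlockBound_cons_cons (hg : GrowsBy ρ g) (hρ : 1 ≤ ρ) (hC : 1 + 2 * C + ρ ≤ ρ ^ 2)
    (hs : ∀ B y, c ≠ y → (occ (blockWord B y c) s : ℝ) ≤ g B)
    (hcs : IsBlockBound (fun B ↦ C * g B) (c :: s)) : IsBlockBound g (c :: c :: s) := by
  refine isBlockBound_cons hg hρ fun B y hcy ↦ ?_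
  induction B using Nat.twoStepInduction with
  | zero =>
    rw [blockWord, occ_nil_cons, Nat.cast_zero]
    exact hg.1
  | one =>
    rw [occ_blockWord_succ_cons_cons, blockWord, occ_nil_cons, occ_nil_cons, mul_zero, add_zero,
      zero_add]
    exact (hs 0 y hcy).trans (hg.monotone hρ zero_le_one)
  | more B ih _ =>
    rw [occ_blockWord_succ_cons_cons, occ_blockWord_succ_cons_of_ne hcy.symm,
      occ_blockWord_succ_cons_of_ne hcy.symm]
    push_cast
    calc (occ (blockWord B c y) (c :: c :: s) + 2 * occ (blockWord B c y) (c :: s) +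
          occ (blockWord (B + 1) y c) s : ℝ)
        ≤ g B + 2 * (C * g B) + g (B + 1) := by
          gcongr
          exacts [hcs B c y hcy, hs (B + 1) y hcy]
      _ = (1 + 2 * C + ρ) * g B - ρ * g B + g (B + 1) := by ring
      _ ≤ ρ ^ 2 * g B - ρ * g B + g (B + 1) := by
          gcongr
          exact hg.nonneg (zero_le_one.trans hρ) B
      _ = (ρ - 1) * (ρ * g B) + g (B + 1) := by ring
      _ ≤ (ρ - 1) * g (B + 1) + g (B + 1) := by
          gcongr
          exact hg.2 B
      _ = ρ * g (B + 1) := by ring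
      _ ≤ g (B + 2) := hg.2 (B + 1)

theorem isBlockBound_replicate_append (hg : GrowsBy ρ g) (hρ : 1 ≤ ρ) (hC : 1 ≤ C)
    (hCρ : C ≤ ρ) (hCρ' : 1 + 2 * C + ρ ≤ ρ ^ 2) (hv : IsBlockBound g v)
    (hcv : IsBlockBound (fun B ↦ C * g B) (c :: v)) (ℓ : ℕ) :
    IsBlockBound g (replicate (ℓ + 2) c ++ v) := by
  have hmono {u : List α} (hu : IsBlockBound g u) : IsBlockBound (fun B ↦ C * g B) u :=
    hu.mono fun B ↦ le_mul_of_one_le_left (hg.nonneg (zero_le_one.trans hρ) B) hC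
  suffices IsBlockBound (fun B ↦ C * g B) (replicate (ℓ + 1) c ++ v) ∧
      IsBlockBound g (replicate (ℓ + 2) c ++ v) from this.2
  induction ℓ with
  | zero => exact ⟨hcv, isBlockBound_cons_cons hg hρ hCρ' (fun B y hcy ↦ hv B y c hcy.symm) hcv⟩
  | succ ℓ ih =>
    exact ⟨hmono ih.2, isBlockBound_cons_cons hg hρ hCρ'
      (fun B y hcy ↦ ih.1.occ_le_of_growsBy hg (zero_le_one.trans hρ) hCρ hcy B) (hmono ih.2)⟩

end BlockWords

section Majorant

variable {α : Type*} [DecidableEq α]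

/-- The bound for words with `m` runs of length one, in terms of the number of blocks. Longer runs
leave a sequence growing by the factor `7 / 3` unchanged, while `7 / 3 < 1 + √2` keeps the
convolution with the powers of `7 / 3` from affecting the order of magnitude. -/
noncomputable def majorant (m : ℕ) : ℕ → ℝ := singleStep^[m] (geomConv (7 / 3) 1)

theorem majorant_succ (m : ℕ) : majorant (m + 1) = singleStep (majorant m) :=
  Function.iterate_succ_apply' ..

theorem majorant_eq_geomConv (m : ℕ) : majorant m = geomConv (7 / 3) (singleStep^[m] 1) :=
  Function.Commute.iterate_left (singleStep_geomConv (7 / 3)) m 1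

theorem growsBy_majorant (m : ℕ) : GrowsBy (7 / 3) (majorant m) := by
  induction m with
  | zero => exact growsBy_geomConv fun _ ↦ zero_le_one
  | succ m ih =>
    rw [majorant_succ]
    exact ih.singleStep

theorem one_le_majorant_zero (B : ℕ) : 1 ≤ majorant 0 B :=
  calc (1 : ℝ) = majorant 0 0 := (geomConv_zero (7 / 3) 1).symm
    _ ≤ majorant 0 B := (growsBy_majorant 0).monotone (by norm_num) B.zero_le

theorem IsBlockBound.majorant_replicate_append {m ℓ : ℕ} {c : α} {v : List α}
    (hv : IsBlockBound (majorant m) v) (hc : v.head? ≠ some c) (hℓ : 2 ≤ ℓ) :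
    IsBlockBound (majorant m) (replicate ℓ c ++ v) := by
  obtain ⟨ℓ, rfl⟩ := Nat.exists_eq_add_of_le' hℓ
  have hg := growsBy_majorant m
  -- `21 / 20` is the factor `2 * ρ / (ρ ^ 2 - 1)` of `GrowsBy.singleStep_le` at `ρ = 7 / 3`.
  refine isBlockBound_replicate_append (C := 21 / 20) hg (by norm_num) (by norm_num)
    (by norm_num) (by norm_num) hv ((hv.cons hc hg (by norm_num)).mono fun B ↦ ?_) ℓ
  linarith [hg.singleStep_le (by norm_num) B]

theorem exists_isBlockBound_majorant : ∀ u : List α, ∃ m, IsBlockBound (majorant m) u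
  | [] => ⟨0, isBlockBound_nil one_le_majorant_zero⟩
  | c :: u => by
    obtain ⟨ℓ, v, hu, hc⟩ := exists_eq_replicate_append c u
    have : v.length < (c :: u).length := by
      rw [hu, length_cons, length_append]
      omega
    obtain ⟨m, hv⟩ := exists_isBlockBound_majorant v
    obtain rfl | hℓ := eq_or_ne ℓ 0
    · refine ⟨m + 1, ?_⟩
      rw [hu, majorant_succ]
      exact hv.cons hc (growsBy_majorant m) (by norm_num)
    · refine ⟨m, ?_⟩
      rw [hu, ← cons_append, ← replicate_succ]
      exact hv.majorant_replicate_append hc (by omega)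
  termination_by u => u.length

end Majorant

section Fourier

open Polynomial

local instance fact_two_pi_pos : Fact (0 < 2 * π) := ⟨two_pi_pos⟩

theorem toAddCircle_coe_apply (P : ℂ[X]) (θ : ℝ) :
    P.toAddCircle (θ : AddCircle (2 * π)) = P.eval (Complex.exp (θ * Complex.I)) := by
  induction P using Polynomial.induction_on' with
  | add P Q hP hQ => rw [map_add, ContinuousMap.add_apply, hP, hQ, eval_add]
  | monomial n a =>
    simp [toAddCircle_monomial_eq_smul_fourier, AddCircle.toCircle_nsmul,
      AddCircle.toCircle_apply_mk]

theorem norm_coeff_le_integral_norm_eval_exp (P : ℂ[X]) (m : ℕ) :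
    ‖P.coeff m‖ ≤ (2 * π)⁻¹ * ∫ θ in -π..π, ‖P.eval (Complex.exp (θ * Complex.I))‖ := by
  have hcoeff := fourierCoeff_eq_intervalIntegral (T := 2 * π) P.toAddCircle m (-π)
  rw [fourierCoeff_toAddCircle_natCast, show -π + 2 * π = π by ring] at hcoeff
  calc ‖P.coeff m‖ = (2 * π)⁻¹ *
        ‖∫ θ in -π..π, fourier (-(m : ℤ)) (θ : AddCircle (2 * π)) • P.toAddCircle θ‖ := by
        rw [hcoeff, norm_smul, one_div, norm_of_nonneg (by positivity)]
    _ ≤ (2 * π)⁻¹ *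
        ∫ θ in -π..π, ‖fourier (-(m : ℤ)) (θ : AddCircle (2 * π)) • P.toAddCircle θ‖ := by
        gcongr
        exact intervalIntegral.norm_integral_le_integral_norm (by linarith [pi_pos])
    _ = _ := by
        simp only [norm_smul, fourier_apply, Circle.norm_coe, one_mul, toAddCircle_coe_apply]

variable {p q : ℝ}

theorem norm_mul_exp_add_le (hp : 0 ≤ p) (hq : 0 ≤ q) (hpq : p + q = 1) {θ : ℝ} (hθ : |θ| ≤ π) :
    ‖(p : ℂ) * Complex.exp (θ * Complex.I) + q‖ ≤ exp (-(2 * p * q / π ^ 2) * θ ^ 2) := by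
  have hnorm : ‖(p : ℂ) * Complex.exp (θ * Complex.I) + q‖ ^ 2 = 1 - 2 * (p * q) * (1 - cos θ) := by
    rw [Complex.exp_mul_I, Complex.sq_norm, Complex.normSq_apply]
    simp only [← Complex.ofReal_cos, ← Complex.ofReal_sin, Complex.add_re, Complex.mul_re,
      Complex.ofReal_re, Complex.I_re, mul_zero, Complex.ofReal_im, Complex.I_im, mul_one, sub_self,
      add_zero, Complex.add_im, Complex.mul_im, zero_add, zero_mul, sub_zero]
    linear_combination p ^ 2 * sin_sq_add_cos_sq θ + (p + q + 1) * hpq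
  refine (sq_le_sq₀ (norm_nonneg _) (exp_pos _).le).1 ?_
  calc ‖(p : ℂ) * Complex.exp (θ * Complex.I) + q‖ ^ 2
      = 1 - 2 * (p * q) * (1 - cos θ) := hnorm
    _ ≤ 1 - 2 * (p * q) * (2 / π ^ 2 * θ ^ 2) := by
        gcongr
        linarith [cos_le_one_sub_mul_cos_sq hθ]
    _ ≤ exp (-(2 * (p * q) * (2 / π ^ 2 * θ ^ 2))) := one_sub_le_exp_neg _
    _ = exp (-(2 * p * q / π ^ 2) * θ ^ 2) ^ 2 := by
        rw [← exp_nat_mul]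
        ring_nf

theorem integral_norm_mul_exp_add_pow_le (hp : 0 < p) (hq : 0 < q) (hpq : p + q = 1)
    {N : ℕ} (hN : N ≠ 0) :
    ∫ θ in -π..π, ‖(p : ℂ) * Complex.exp (θ * Complex.I) + q‖ ^ N ≤
      √(π / (2 * p * q * N / π ^ 2)) := by
  have hpi := pi_pos
  have hgauss : MeasureTheory.Integrable fun θ : ℝ ↦ exp (-(2 * p * q * N / π ^ 2) * θ ^ 2) :=
    integrable_exp_neg_mul_sq (by positivity)
  calc ∫ θ in -π..π, ‖(p : ℂ) * Complex.exp (θ * Complex.I) + q‖ ^ N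
      ≤ ∫ θ in -π..π, exp (-(2 * p * q * N / π ^ 2) * θ ^ 2) := by
        refine intervalIntegral.integral_mono_on (by linarith)
          (Continuous.intervalIntegrable (by fun_prop) _ _) hgauss.intervalIntegrable fun θ hθ ↦ ?_
        calc ‖(p : ℂ) * Complex.exp (θ * Complex.I) + q‖ ^ N
            ≤ exp (-(2 * p * q / π ^ 2) * θ ^ 2) ^ N := by
              gcongr
              exact norm_mul_exp_add_le hp.le hq.le hpq (abs_le.2 hθ)
          _ = exp (-(2 * p * q * N / π ^ 2) * θ ^ 2) := by
              rw [← exp_nat_mul]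
              ring_nf
    _ ≤ ∫ θ, exp (-(2 * p * q * N / π ^ 2) * θ ^ 2) := by
        rw [intervalIntegral.integral_of_le (by linarith)]
        exact MeasureTheory.setIntegral_le_integral hgauss (.of_forall fun θ ↦ (exp_pos _).le)
    _ = √(π / (2 * p * q * N / π ^ 2)) := integral_gaussian _

theorem choose_mul_pow_mul_pow_mul_sqrt_le (hp : 0 < p) (hq : 0 < q) (hpq : p + q = 1) (N m : ℕ) :
    N.choose m * p ^ m * q ^ (N - m) * √(8 * p * q * N) ≤ √π := by
  obtain rfl | hN := eq_or_ne N 0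
  · simp
  have hcoeff : N.choose m * p ^ m * q ^ (N - m) =
      ‖(((X + C (q : ℂ)) ^ N).comp (C (p : ℂ) * X)).coeff m‖ := by
    rw [comp_C_mul_X_coeff, coeff_X_add_C_pow]
    simp only [norm_mul, norm_pow, Complex.norm_real, norm_of_nonneg hp.le, norm_of_nonneg hq.le,
      RCLike.norm_natCast]
    ring
  calc N.choose m * p ^ m * q ^ (N - m) * √(8 * p * q * N)
      ≤ (2 * π)⁻¹ * √(π / (2 * p * q * N / π ^ 2)) * √(8 * p * q * N) := by
        rw [hcoeff]
        grw [norm_coeff_le_integral_norm_eval_exp, ← integral_norm_mul_exp_add_pow_le hp hq hpq hN]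
        simp
    _ = √π := by
        rw [mul_assoc, ← sqrt_mul (by positivity), show π / (2 * p * q * N / π ^ 2) *
          (8 * p * q * N) = (2 * π) ^ 2 * π by field_simp; norm_num, sqrt_mul (by positivity),
          sqrt_sq (by positivity)]
        field_simp

end Fourier

section Asymptotics

theorem iterate_singleStep_one_mul_le {r : ℝ} (hr : 0 < r) (hr2 : 2 * r + r ^ 2 = 1) (m B : ℕ) :
    singleStep^[m] 1 B * r ^ B * √(B + 1) ≤ √π / (r ^ 2 * √(8 * r ^ 3)) := by
  rw [iterate_singleStep_one, le_div_iff₀ (by positivity)]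
  generalize hN : (B + m) / 2 = N
  obtain hm | hm := lt_or_ge N m
  · rw [Nat.choose_eq_zero_of_lt hm]
    simp
  have hpow : r ^ B * r ^ 2 ≤ r ^ m * (r ^ 2) ^ (N + 1 - m) := by
    rw [← pow_add, ← pow_mul, ← pow_add]
    exact pow_le_pow_of_le_one hr.le (by nlinarith) (by omega)
  have hsqrt : √(B + 1) * √(8 * r ^ 3) ≤ √(8 * (2 * r) * r ^ 2 * (N + 1 : ℕ)) := by
    have hB : (B + 1 : ℝ) ≤ 2 * (N + 1 : ℕ) := by
      exact_mod_cast show B + 1 ≤ 2 * (N + 1) by omega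
    rw [← sqrt_mul (by positivity)]
    refine sqrt_le_sqrt ?_
    calc (B + 1) * (8 * r ^ 3) ≤ 2 * (N + 1 : ℕ) * (8 * r ^ 3) := by gcongr
      _ = 8 * (2 * r) * r ^ 2 * (N + 1 : ℕ) := by ring
  calc 2 ^ m * (N.choose m : ℝ) * r ^ B * √(B + 1) * (r ^ 2 * √(8 * r ^ 3))
      = N.choose m * 2 ^ m * (r ^ B * r ^ 2) * (√(B + 1) * √(8 * r ^ 3)) := by ring
    _ ≤ (N + 1).choose m * 2 ^ m * (r ^ m * (r ^ 2) ^ (N + 1 - m)) *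
        √(8 * (2 * r) * r ^ 2 * (N + 1 : ℕ)) := by
        gcongr
        exact N.le_succ
    _ = (N + 1).choose m * (2 * r) ^ m * (r ^ 2) ^ (N + 1 - m) *
        √(8 * (2 * r) * r ^ 2 * (N + 1 : ℕ)) := by ring
    _ ≤ √π := choose_mul_pow_mul_pow_mul_sqrt_le (by positivity) (by positivity) hr2 (N + 1) m

theorem exists_majorant_mul_sqrt_le :
    ∃ K, 0 < K ∧ ∀ m B : ℕ, majorant m B * √(B + 1) ≤ K * (1 + √2) ^ B := by
  have hsq : √2 ^ 2 = 2 := sq_sqrt zero_le_two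
  have hr : 0 < √2 - 1 := by nlinarith [sqrt_nonneg 2]
  have hρ : 7 / 3 * (√2 - 1) < 1 := by nlinarith [sqrt_nonneg 2]
  have hK := iterate_singleStep_one_mul_le hr (by linear_combination hsq)
  set K := √π / ((√2 - 1) ^ 2 * √(8 * (√2 - 1) ^ 3))
  have hnonneg (m B : ℕ) : 0 ≤ singleStep^[m] 1 B * (√2 - 1) ^ B := by
    rw [iterate_singleStep_one]
    positivity
  refine ⟨K / (1 - 7 / 3 * (√2 - 1)) ^ 2, div_pos (by positivity) (pow_pos (sub_pos.2 hρ) 2),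
    fun m B ↦ ?_⟩
  calc majorant m B * √(B + 1)
      = majorant m B * (√2 - 1) ^ B * √(B + 1) * (1 + √2) ^ B := by
        have hinv : (√2 - 1) ^ B * (1 + √2) ^ B = 1 := by
          rw [← mul_pow, show (√2 - 1) * (1 + √2) = 1 by linear_combination hsq, one_pow]
        linear_combination -majorant m B * √(B + 1) * hinv
    _ ≤ K / (1 - 7 / 3 * (√2 - 1)) ^ 2 * (1 + √2) ^ B := by
        gcongr
        rw [majorant_eq_geomConv, geomConv_mul_pow]
        exact geomConv_mul_sqrt_le (by positivity) hρ (hnonneg m) (hK m) B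

theorem exists_length_eq_forall_occ_le {α : Type*} [DecidableEq α] {n : ℕ} {x y : α} {M : ℝ}
    (hM : ∀ u, (occ (blockWord (n / 2) x y) u : ℝ) ≤ M) :
    ∃ w : List α, w.length = n ∧ ∀ u, (occ w u : ℝ) ≤ 2 * M := by
  obtain hn | hn := n.even_or_odd
  · refine ⟨blockWord (n / 2) x y, by rw [length_blockWord, Nat.two_mul_div_two_of_even hn],
      fun u ↦ ?_⟩
    linarith [hM u, (occ (blockWord (n / 2) x y) u).cast_nonneg (α := ℝ)]
  · exact ⟨x :: blockWord (n / 2) x y,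
      by rw [length_cons, length_blockWord, Nat.two_mul_div_two_add_one_of_odd hn],
      occ_cons_le_two_mul hM x⟩

theorem occ_blockWord_half_le {α : Type*} [DecidableEq α] {K : ℝ}
    (hK : ∀ m B : ℕ, majorant m B * √(B + 1) ≤ K * (1 + √2) ^ B) {x y : α} (hxy : x ≠ y) {n : ℕ}
    (hn : n ≠ 0) (u : List α) :
    (occ (blockWord (n / 2) x y) u : ℝ) ≤ √2 * K * (1 + √2) ^ (n / 2 : ℝ) / √n := by
  obtain ⟨m, hu⟩ := exists_isBlockBound_majorant u
  have hK₀ : 0 ≤ K := by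
    have hK₀ := hK 0 0
    rw [pow_zero, mul_one] at hK₀
    exact (mul_nonneg (zero_le_one.trans (one_le_majorant_zero 0)) (sqrt_nonneg _)).trans hK₀
  have hsqrt : √n ≤ √2 * √((n / 2 : ℕ) + 1) := by
    rw [← sqrt_mul zero_le_two]
    exact sqrt_le_sqrt (by exact_mod_cast show n ≤ 2 * (n / 2 + 1) by omega)
  have hpow : (1 + √2) ^ (n / 2) ≤ (1 + √2) ^ (n / 2 : ℝ) := by
    rw [← rpow_natCast]
    exact rpow_le_rpow_of_exponent_le (by linarith [sqrt_nonneg 2]) Nat.cast_div_le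
  rw [le_div_iff₀ (by positivity)]
  calc (occ (blockWord (n / 2) x y) u : ℝ) * √n
      ≤ majorant m (n / 2) * (√2 * √((n / 2 : ℕ) + 1)) :=
        mul_le_mul (hu _ x y hxy) hsqrt (sqrt_nonneg _)
          ((growsBy_majorant m).nonneg (by norm_num) _)
    _ = √2 * (majorant m (n / 2) * √((n / 2 : ℕ) + 1)) := by ring
    _ ≤ √2 * (K * (1 + √2) ^ (n / 2 : ℝ)) := by
        grw [hK m (n / 2), hpow]
    _ = √2 * K * (1 + √2) ^ (n / 2 : ℝ) := by ring

end Asymptotics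

theorem stmt_11 :
    ∃ c : ℝ, ∀ k : ℕ, 2 ≤ k → ∀ n : ℕ, 1 ≤ n →
      minS k n ≤ (1 / 2) * Real.logb 2 (1 + Real.sqrt 2) * n
        - (1 / 2) * Real.logb 2 n + c := by
  obtain ⟨K, hK, hmajorant⟩ := exists_majorant_mul_sqrt_le
  refine ⟨logb 2 (2 * √2 * K), fun k hk n hn ↦ ?_⟩
  have hn₀ : n ≠ 0 := by omega
  obtain ⟨w, hw, hocc⟩ := exists_length_eq_forall_occ_le fun u ↦
    occ_blockWord_half_le hmajorant (show (⟨0, by omega⟩ : Fin k) ≠ ⟨1, hk⟩ by simp) hn₀ u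
  calc minS k n ≤ logb 2 (2 * (√2 * K * (1 + √2) ^ (n / 2 : ℝ) / √n)) := minS_le_logb hw hocc
    _ = logb 2 (2 * √2 * K * (1 + √2) ^ (n / 2 : ℝ) / (n : ℝ) ^ (1 / 2 : ℝ)) := by
        rw [← sqrt_eq_rpow]
        ring_nf
    _ = logb 2 (2 * √2 * K) + n / 2 * logb 2 (1 + √2) - 1 / 2 * logb 2 n := by
        rw [logb_div (by positivity) (by positivity), logb_mul (by positivity) (by positivity),
          logb_rpow_eq_mul_logb_of_pos (by positivity),
          logb_rpow_eq_mul_logb_of_pos (by positivity)]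
    _ = (1 / 2) * logb 2 (1 + √2) * n - (1 / 2) * logb 2 n + logb 2 (2 * √2 * K) := by ring
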